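/- Let S ⊆ P be a nonempty convex set, let p^0 ∈ P be strictly positive componentwise, and let p̄ minimize D(·, p^0) over S. Then supp(p̄) = ∪_{p ∈ S} supp(p); in particular, every route used by some element of S is used by the KL projection of p^0 onto S. -/

import Mathlib

/-!
Write `p_t = (1 - t) p̄ + t p` for `p ∈ S`. If `p̄` misses a route `k₀` used by `p`, the term of
`D(p_t, p⁰)` at `k₀` differs from its chord by exactly the nonpositive amount
`q_{k₀} p_{k₀} t log t`, because `(t b) log (t b) = t (b log b) + b t log t`; the other terms lie below
their chords by convexity of `x ↦ x log x`. Hence (`KLdiv_segment_le`)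
`D(p_t, p⁰) ≤ (1 - t) D(p̄, p⁰) + t D(p, p⁰) + q_{k₀} p_{k₀} t log t`.
Minimality of `p̄` and division by `t` give `D(p̄, p⁰) - D(p, p⁰) ≤ q_{k₀} p_{k₀} log t` for every
`t ∈ (0, 1]`, which is impossible since `log t → -∞` as `t → 0⁺`.
-/

open Matrix Filter Finset Topology

noncomputable section

variable {A W K : Type*}

/-- OD-route incidence matrix `Σ`: each column is the standard unit vector at `od k`
(every route `k` serves exactly one OD pair, `od k`). -/
def Sig [DecidableEq W] (od : K → W) : Matrix W K ℝ :=
  Matrix.of fun w k => if od k = w then 1 else 0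

/-- The strategy set `P = {p : p ≥ 0, Σ p = 1}`. -/
def Pset [Fintype K] [DecidableEq W] (od : K → W) : Set (K → ℝ) :=
  {p | (∀ k, 0 ≤ p k) ∧ ∀ w : W, (Sig od).mulVec p w = 1}

/-- `q = Σᵀ d`. -/
def qvec [Fintype W] [DecidableEq W] (od : K → W) (d : W → ℝ) : K → ℝ :=
  (Sig od)ᵀ.mulVec d

/-- `bΛ = Λ · diag q`. -/
def bLam [Fintype K] [Fintype W] [DecidableEq W] [DecidableEq K]
    (Λ : Matrix A K ℝ) (od : K → W) (d : W → ℝ) : Matrix A K ℝ :=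
  Λ * Matrix.diagonal (qvec od d)

/-- The link-flow set `X = {bΛ p : p ∈ P}`. -/
def Xset [Fintype K] [Fintype W] [DecidableEq W] [DecidableEq K]
    (Λ : Matrix A K ℝ) (od : K → W) (d : W → ℝ) : Set (A → ℝ) :=
  (fun p => (bLam Λ od d).mulVec p) '' Pset od

/-- The route-cost map `c(p) = Λᵀ u(bΛ p)`. -/
def routeCost [Fintype A] [Fintype K] [Fintype W] [DecidableEq W] [DecidableEq K]
    (Λ : Matrix A K ℝ) (od : K → W) (d : W → ℝ)
    (u : (A → ℝ) → (A → ℝ)) : (K → ℝ) → (K → ℝ) :=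
  fun p => Λᵀ.mulVec (u ((bLam Λ od d).mulVec p))

/-- The UE set `P*`: solutions of the variational inequality. -/
def UEset [Fintype A] [Fintype K] [Fintype W] [DecidableEq W] [DecidableEq K]
    (Λ : Matrix A K ℝ) (od : K → W) (d : W → ℝ)
    (u : (A → ℝ) → (A → ℝ)) : Set (K → ℝ) :=
  {p | p ∈ Pset od ∧ ∀ p' ∈ Pset od, 0 ≤ routeCost Λ od d u p ⬝ᵥ (p' - p)}

/-- The logit map `q_r`. -/
def logit [Fintype K] [DecidableEq W] (od : K → W) (r : ℝ) (s : K → ℝ) : K → ℝ :=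
  fun k => Real.exp (-r * s k) /
    ∑ k' ∈ Finset.univ.filter (fun k' => od k' = od k), Real.exp (-r * s k')

/-- The negative entropy `φ(p) = ∑ₖ qₖ pₖ log pₖ` (with `0·log 0 = 0`). -/
def negEnt [Fintype K] [Fintype W] [DecidableEq W] (od : K → W) (d : W → ℝ)
    (p : K → ℝ) : ℝ :=
  ∑ k, qvec od d k * (p k * Real.log (p k))

/-- The KL divergence `D(p, p') = ∑ₖ qₖ pₖ (log pₖ − log p'ₖ)` (with `0·log 0 = 0`). -/
def KLdiv [Fintype K] [Fintype W] [DecidableEq W] (od : K → W) (d : W → ℝ)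
    (p p' : K → ℝ) : ℝ :=
  ∑ k, qvec od d k * (p k * (Real.log (p k) - Real.log (p' k)))

theorem qvec_apply [Fintype W] [DecidableEq W] (od : K → W) (d : W → ℝ) (k : K) :
    qvec od d k = d (od k) := by
  simp [qvec, Sig, Matrix.mulVec, dotProduct]

/-- Convexity of `x ↦ x (log x - c)` on `[0, ∞)`, from that of `x ↦ x log x`. -/
theorem mul_log_sub_segment_le {a b t : ℝ} (c : ℝ) (ha : 0 ≤ a) (hb : 0 ≤ b)
    (ht : 0 ≤ t) (ht1 : t ≤ 1) :
    ((1 - t) * a + t * b) * (Real.log ((1 - t) * a + t * b) - c) ≤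
      (1 - t) * (a * (Real.log a - c)) + t * (b * (Real.log b - c)) := by
  have h := Real.convexOn_mul_log.2 (Set.mem_Ici.2 ha) (Set.mem_Ici.2 hb)
    (sub_nonneg.2 ht1) ht (by ring)
  simp only [smul_eq_mul] at h
  linarith

/-- Convexity of the divergence along a segment, with the extra term `t log t` gained from a
route `k₀` that is unused at the starting point `a`. -/
theorem KLdiv_segment_le [Fintype W] [Fintype K] [DecidableEq W] (od : K → W) (d : W → ℝ)
    (hd : ∀ w, 0 < d w) (p0 a b : K → ℝ) (ha : ∀ k, 0 ≤ a k) (hb : ∀ k, 0 ≤ b k)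
    {k₀ : K} (ha₀ : a k₀ = 0) (hb₀ : 0 < b k₀) {t : ℝ} (ht : 0 < t) (ht1 : t ≤ 1) :
    KLdiv od d ((1 - t) • a + t • b) p0 ≤
      (1 - t) * KLdiv od d a p0 + t * KLdiv od d b p0 + d (od k₀) * b k₀ * (t * Real.log t) := by
  classical
  have hsum : d (od k₀) * b k₀ * (t * Real.log t) =
      ∑ k, if k = k₀ then d (od k₀) * b k₀ * (t * Real.log t) else 0 := by simp
  rw [hsum]
  simp only [KLdiv, Finset.mul_sum, ← Finset.sum_add_distrib, qvec_apply, Pi.add_apply,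
    Pi.smul_apply, smul_eq_mul]
  refine Finset.sum_le_sum fun k _ => ?_
  by_cases hk : k = k₀
  · subst hk
    rw [ha₀, if_pos rfl, mul_zero, zero_add, Real.log_mul ht.ne' hb₀.ne']
    apply le_of_eq
    ring
  · have h := mul_le_mul_of_nonneg_left
      (mul_log_sub_segment_le (Real.log (p0 k)) (ha k) (hb k) ht.le ht1) (hd (od k)).le
    rw [if_neg hk]
    linarith

/-- let `S ⊆ P` be a nonempty convex set, `p⁰ ∈ P` strictly
positive, and let `p̄` minimize `D(·, p⁰)` over `S`. Then
`supp p̄ = ⋃_{p ∈ S} supp p`: every route used by some element of `S` is used by the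
KL projection of `p⁰` onto `S`. -/
theorem statement19
    [Fintype W] [Fintype K] [DecidableEq W]
    (od : K → W) (d : W → ℝ)
    (hd : ∀ w, 0 < d w)
    (S : Set (K → ℝ)) (hS : S ⊆ Pset od) (hSne : S.Nonempty) (hSconv : Convex ℝ S)
    (p0 : K → ℝ) (hp0 : p0 ∈ Pset od) (hp0pos : ∀ k, 0 < p0 k)
    (pbar : K → ℝ) (hmem : pbar ∈ S)
    (hmin : ∀ p ∈ S, KLdiv od d pbar p0 ≤ KLdiv od d p p0) :
    {k | 0 < pbar k} = {k | ∃ p ∈ S, 0 < p k} := by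
  ext k₀
  refine ⟨fun h => ⟨pbar, hmem, h⟩, ?_⟩
  rintro ⟨p, hp, hpk⟩
  by_contra hk
  have h0 : pbar k₀ = 0 := le_antisymm (not_lt.1 hk) ((hS hmem).1 k₀)
  have hc : 0 < d (od k₀) * p k₀ := mul_pos (hd _) hpk
  have hle := hmin p hp
  -- `t = exp (-M)` is chosen so that `q_{k₀} p_{k₀} log t = D(p̄, p⁰) - D(p, p⁰) - 1`.
  obtain ⟨M, hM⟩ : ∃ M, M = (KLdiv od d p p0 - KLdiv od d pbar p0 + 1) / (d (od k₀) * p k₀) :=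
    ⟨_, rfl⟩
  have hM0 : 0 ≤ M := hM ▸ div_nonneg (by linarith) hc.le
  have hMc : d (od k₀) * p k₀ * M = KLdiv od d p p0 - KLdiv od d pbar p0 + 1 := by
    rw [hM, mul_div_cancel₀ _ hc.ne']
  have ht : 0 < Real.exp (-M) := Real.exp_pos _
  have ht1 : Real.exp (-M) ≤ 1 := Real.exp_le_one_iff.2 (by linarith)
  have hseg := KLdiv_segment_le od d hd p0 pbar p (hS hmem).1 (hS hp).1 h0 hpk ht ht1
  have hlow := hmin _ (hSconv hmem hp (sub_nonneg.2 ht1) ht.le (by ring))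
  rw [Real.log_exp] at hseg
  have hextra : d (od k₀) * p k₀ * (Real.exp (-M) * -M) =
      -(Real.exp (-M) * (KLdiv od d p p0 - KLdiv od d pbar p0 + 1)) := by
    rw [← hMc]
    ring
  rw [hextra] at hseg
  linarith
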